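/- Let X be a compact metric space, Λ a compact metric space, and w : Λ × X → X a weakly hyperbolic IFS. Then w satisfies Property P*: there exists a map Γ : Ω → X such that for every ε > 0 there exists n₀ ∈ ℕ with d(w_{σ₁…σₙ}(x), Γ(σ)) < ε for all n ≥ n₀, all σ ∈ Ω and all x ∈ X; in particular the limit lim_{n→∞} w_{σ₁…σₙ}(x) exists for every σ and x, is independent of x, and the convergence is uniform in σ and x. -/

import Mathlib

open Metric Set Filter Topology

/-- `seqComp w σ n = w_{σ₁} ∘ ⋯ ∘ w_{σₙ}` (with `σ i` denoting `σ_{i+1}`). -/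
def seqComp {Λ X : Type*} (w : Λ → X → X) (σ : ℕ → Λ) : ℕ → X → X
  | 0 => id
  | n + 1 => seqComp w σ n ∘ w (σ n)

/-!
For each `σ` the images `w_{σ₁…σₙ}(X)` decrease, so by compactness their closures have a common
point `Γ σ`, and `w_{σ₁…σₙ}(x)` is within `diam (w_{σ₁…σₙ}(X))` of it. These diameters are
continuous in `σ`, decrease in `n` and tend to `0` pointwise on the compact space `ℕ → Λ`; by Dini's
theorem they tend to `0` uniformly.
-/

theorem continuous_ediam_range {T X Y : Type*} [TopologicalSpace T] [TopologicalSpace X]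
    [CompactSpace X] [PseudoEMetricSpace Y] {f : T → X → Y}
    (hf : Continuous fun p : T × X => f p.1 p.2) :
    Continuous fun t => ediam (range (f t)) := by
  have ediam_eq (t : T) :
      ediam (range (f t)) = sSup ((fun p : X × X => edist (f t p.1) (f t p.2)) '' univ) := by
    rw [ediam_eq_sSup, image2_range, image_univ]
  have edist_continuous :
      Continuous fun q : T × X × X => edist (f q.1 q.2.1) (f q.1 q.2.2) :=
    (hf.comp (continuous_fst.prodMk continuous_snd.fst)).edist
      (hf.comp (continuous_fst.prodMk continuous_snd.snd))
  simp_rw [ediam_eq]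
  exact isCompact_univ.continuous_sSup edist_continuous

theorem continuous_diam_range {T X Y : Type*} [TopologicalSpace T] [TopologicalSpace X]
    [CompactSpace X] [PseudoMetricSpace Y] {f : T → X → Y}
    (hf : Continuous fun p : T × X => f p.1 p.2) :
    Continuous fun t => diam (range (f t)) := by
  have ediam_ne_top (t : T) : ediam (range (f t)) ≠ ⊤ :=
    (isCompact_range (hf.comp (.prodMk_right t))).isBounded.ediam_ne_top
  exact ENNReal.continuousOn_toReal.comp_continuous (continuous_ediam_range hf) ediam_ne_top

theorem exists_forall_dist_le_diam_of_directed {ι Y : Type*} [Nonempty ι] [PseudoMetricSpace Y]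
    [CompactSpace Y] {s : ι → Set Y} (hs : Directed (· ⊇ ·) s) (hne : ∀ i, (s i).Nonempty) :
    ∃ z, ∀ i, ∀ y ∈ s i, dist y z ≤ diam (s i) := by
  have closure_directed : Directed (· ⊇ ·) fun i => closure (s i) := fun i j =>
    (hs i j).imp fun _ h => ⟨closure_mono h.1, closure_mono h.2⟩
  obtain ⟨z, hz⟩ : (⋂ i, closure (s i)).Nonempty :=
    IsCompact.nonempty_iInter_of_directed_nonempty_isCompact_isClosed _ closure_directed
      (fun i => (hne i).closure) (fun _ => isClosed_closure.isCompact)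
      (fun _ => isClosed_closure)
  refine ⟨z, fun i y hy => ?_⟩
  rw [← diam_closure]
  exact dist_le_diam_of_mem isBounded_of_compactSpace (subset_closure hy) (mem_iInter.1 hz i)

section SeqComp

variable {Λ X : Type*}

theorem antitone_range_seqComp (w : Λ → X → X) (σ : ℕ → Λ) :
    Antitone fun n => range (seqComp w σ n) :=
  antitone_nat_of_succ_le fun n => range_comp_subset_range (w (σ n)) (seqComp w σ n)

theorem continuous_seqComp [TopologicalSpace Λ] [TopologicalSpace X] {w : Λ → X → X}
    (hw : Continuous fun p : Λ × X => w p.1 p.2) (n : ℕ) :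
    Continuous fun p : (ℕ → Λ) × X => seqComp w p.1 n p.2 := by
  induction n with
  | zero => exact continuous_snd
  | succ n ih =>
    have last_continuous : Continuous fun p : (ℕ → Λ) × X => w (p.1 n) p.2 :=
      hw.comp₂ ((continuous_apply n).comp continuous_fst) continuous_snd
    exact ih.comp (continuous_fst.prodMk last_continuous)

variable [TopologicalSpace Λ] [CompactSpace Λ] [PseudoMetricSpace X] [CompactSpace X]

theorem tendstoUniformly_diam_range_seqComp {w : Λ → X → X}
    (hw : Continuous fun p : Λ × X => w p.1 p.2)
    (hyp : ∀ σ : ℕ → Λ, Tendsto (fun n => diam (range (seqComp w σ n))) atTop (𝓝 0)) :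
    TendstoUniformly (fun n σ => diam (range (seqComp w σ n))) (fun _ => 0) atTop :=
  Antitone.tendstoUniformly_of_forall_tendsto
    (fun n => continuous_diam_range (continuous_seqComp hw n))
    (fun _ _ hmn σ => diam_mono (antitone_range_seqComp w σ hmn) isBounded_of_compactSpace)
    continuous_const hyp

theorem stmt_1_general [Nonempty X] (w : Λ → X → X)
    (hw : Continuous fun p : Λ × X => w p.1 p.2)
    (hyp : ∀ σ : ℕ → Λ, Tendsto (fun n => diam (range (seqComp w σ n))) atTop (𝓝 0)) :
    ∃ Γ : (ℕ → Λ) → X, ∀ ε > (0 : ℝ), ∃ n₀ : ℕ, ∀ n ≥ n₀, ∀ σ : ℕ → Λ, ∀ x : X,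
      dist (seqComp w σ n x) (Γ σ) < ε := by
  choose Γ hΓ using fun σ : ℕ → Λ => exists_forall_dist_le_diam_of_directed
    (antitone_range_seqComp w σ).directed_ge fun n => range_nonempty (seqComp w σ n)
  refine ⟨Γ, fun ε hε => ?_⟩
  obtain ⟨n₀, hn₀⟩ := eventually_atTop.1 <|
    Metric.tendstoUniformly_iff.1 (tendstoUniformly_diam_range_seqComp hw hyp) ε hε
  refine ⟨n₀, fun n hn σ x => ?_⟩
  calc dist (seqComp w σ n x) (Γ σ) ≤ diam (range (seqComp w σ n)) :=
        hΓ σ n _ (mem_range_self x)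
    _ ≤ dist 0 (diam (range (seqComp w σ n))) := by
        rw [dist_zero_left]; exact Real.le_norm_self _
    _ < ε := hn₀ n hn σ

end SeqComp

/-- Property P* for weakly hyperbolic IFS on a compact phase space. -/
theorem stmt_1 {Λ X : Type*} [MetricSpace Λ] [CompactSpace Λ]
    [MetricSpace X] [CompactSpace X] [Nonempty X]
    (w : Λ → X → X) (hw : Continuous fun p : Λ × X => w p.1 p.2)
    (hyp : ∀ σ : ℕ → Λ,
      Tendsto (fun n => diam (Set.range (seqComp w σ n))) atTop (𝓝 0)) :
    ∃ Γ : (ℕ → Λ) → X, ∀ ε > (0 : ℝ), ∃ n₀ : ℕ, ∀ n ≥ n₀, ∀ σ : ℕ → Λ, ∀ x : X,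
      dist (seqComp w σ n x) (Γ σ) < ε :=
  stmt_1_general w hw hyp
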